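/- Let δ ∈ ℤ. A partition λ belongs to A_δ if and only if one of the following holds: (i) δ ≥ 0 and λ^T_1 + λ^T_2 ≤ δ; (ii) δ < 0 is even and λ_1 ≤ −δ/2; (iii) δ < 0 is odd and λ_1 + λ_2 ≤ 2 − δ. -/

import Mathlib

open Polynomial

/-- A partition: a weakly decreasing, finitely supported sequence of naturals λ_1, λ_2, …. -/
structure Ptn where
  toFun : ℕ+ → ℕ
  antitone' : ∀ i j : ℕ+, i ≤ j → toFun j ≤ toFun i
  finite_support' : ∃ N : ℕ+, ∀ i : ℕ+, N ≤ i → toFun i = 0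

namespace Ptn

/-- The transpose partition: λ^T_i = #{k ≥ 1 : λ_k ≥ i}. -/
noncomputable def transpose (p : Ptn) (i : ℕ+) : ℕ :=
  Set.ncard {k : ℕ+ | (i : ℕ) ≤ p.toFun k}

/-- The empty partition. -/
def empty : Ptn where
  toFun := fun _ => 0
  antitone' := fun _ _ _ => le_refl 0
  finite_support' := ⟨1, fun _ _ => rfl⟩

end Ptn

/-- e_δ(λ)_i = λ^T_i − δ/2 − i + 1. -/
noncomputable def ed (δ : ℤ) (p : Ptn) (i : ℕ+) : ℚ :=
  (p.transpose i : ℚ) - (δ : ℚ) / 2 - ((i : ℕ) : ℚ) + 1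

/-- The δ-degree of singularity: #{(i,j) : 1 ≤ i < j, e_δ(λ)_i + e_δ(λ)_j = 0}. -/
noncomputable def degd (δ : ℤ) (p : Ptn) : ℕ :=
  Set.ncard {q : ℕ+ × ℕ+ | q.1 < q.2 ∧ ed δ p q.1 + ed δ p q.2 = 0}

/-- The vertex set L: nonnegative integers if δ is even, {1/2, 3/2, …} if δ is odd. -/
def Lset (δ : ℤ) : Set ℚ :=
  {n : ℚ | 0 ≤ n ∧ ∃ k : ℤ, n + (δ : ℚ) / 2 = (k : ℚ)}

/-- Vertex n is labelled ∘ in x_λ: no entry of e_δ(λ) has absolute value n. -/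
def IsCirc (δ : ℤ) (p : Ptn) (n : ℚ) : Prop := ∀ i : ℕ+, |ed δ p i| ≠ n

/-- Vertex n is labelled × in x_λ: n > 0 and both n and −n occur as entries. -/
def IsTimes (δ : ℤ) (p : Ptn) (n : ℚ) : Prop :=
  0 < n ∧ (∃ i : ℕ+, ed δ p i = n) ∧ (∃ i : ℕ+, ed δ p i = -n)

/-- Vertex n is labelled ∧ in x_λ: n > 0, n occurs as an entry and −n does not. -/
def IsUp (δ : ℤ) (p : Ptn) (n : ℚ) : Prop :=
  0 < n ∧ (∃ i : ℕ+, ed δ p i = n) ∧ ¬ (∃ i : ℕ+, ed δ p i = -n)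

/-- Vertex n is labelled ∨ in x_λ: n > 0, −n occurs and n does not, or n = 0 and 0 occurs. -/
def IsDown (δ : ℤ) (p : Ptn) (n : ℚ) : Prop :=
  (0 < n ∧ (∃ i : ℕ+, ed δ p i = -n) ∧ ¬ (∃ i : ℕ+, ed δ p i = n)) ∨
  (n = 0 ∧ ∃ i : ℕ+, ed δ p i = 0)

/-- q is obtained from p by adding one box, in row k. -/
def AddBoxAt (p q : Ptn) (k : ℕ+) : Prop :=
  q.toFun k = p.toFun k + 1 ∧ ∀ t : ℕ+, t ≠ k → q.toFun t = p.toFun t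

/-- q is obtained from p by removing one box, from row l. -/
def RemoveBoxAt (p q : Ptn) (l : ℕ+) : Prop :=
  q.toFun l + 1 = p.toFun l ∧ ∀ t : ℕ+, t ≠ l → q.toFun t = p.toFun t

/-- A box is addable to p at position (k,i): λ_k + 1 = i and increasing the k-th part
yields a partition. -/
def AddableAt (p : Ptn) (k i : ℕ+) : Prop :=
  p.toFun k + 1 = (i : ℕ) ∧ ∃ q : Ptn, AddBoxAt p q k

/-- A box is removable from p at position (l,j): λ_l = j and decreasing the l-th part
yields a partition. -/
def RemovableAt (p : Ptn) (l j : ℕ+) : Prop :=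
  p.toFun l = (j : ℕ) ∧ ∃ q : Ptn, RemoveBoxAt p q l

/-- Edge of the Young graph: q is obtained from p by adding or removing a single box. -/
def YoungEdge (p q : Ptn) : Prop := (∃ k, AddBoxAt p q k) ∨ (∃ k, AddBoxAt q p k)

/-- d(i,j) = λ_i + λ_j − i − j + 1 if i ≤ j, and −λ^T_i − λ^T_j + i + j − 1 if i > j. -/
noncomputable def dbox (p : Ptn) (i j : ℕ+) : ℤ :=
  if (i : ℕ) ≤ (j : ℕ) then
    (p.toFun i : ℤ) + (p.toFun j : ℤ) - ((i : ℕ) : ℤ) - ((j : ℕ) : ℤ) + 1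
  else
    -(p.transpose i : ℤ) - (p.transpose j : ℤ) + ((i : ℕ) : ℤ) + ((j : ℕ) : ℤ) - 1

/-- Hook length h(i,j) = λ_i − j + λ^T_j − i + 1. -/
noncomputable def hook (p : Ptn) (i j : ℕ+) : ℤ :=
  (p.toFun i : ℤ) - ((j : ℕ) : ℤ) + (p.transpose j : ℤ) - ((i : ℕ) : ℤ) + 1

/-- The King polynomial P_λ(u) = ∏_{(i,j)∈[λ]} (u − 1 + d(i,j)) / h(i,j) ∈ ℚ[u]. -/
noncomputable def king (p : Ptn) : Polynomial ℚ :=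
  ∏ᶠ (q : ℕ+ × ℕ+) (_ : (q.2 : ℕ) ≤ p.toFun q.1),
    Polynomial.C ((hook p q.1 q.2 : ℚ))⁻¹ *
      (Polynomial.X + Polynomial.C ((dbox p q.1 q.2 : ℚ) - 1))

/-- (ρ_δ)_i = −δ/2 − i + 1. -/
def rhod (δ : ℤ) (i : ℕ+) : ℚ := -(δ : ℚ) / 2 - ((i : ℕ) : ℚ) + 1

/-- A sequence is dominant if it is strictly decreasing. -/
def Dominant (x : ℕ+ → ℚ) : Prop := ∀ i j : ℕ+, i < j → x j < x i

/-- ε_i: the sequence with 1 in position i and 0 elsewhere. -/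
def eps (i : ℕ+) : ℕ+ → ℚ := fun j => if j = i then 1 else 0

/-- Two sequences are adjacent if they differ by ±ε_i for some i. -/
def AdjacentSeq (x y : ℕ+ → ℚ) : Prop := ∃ i : ℕ+, y = x + eps i ∨ y = x - eps i

/-- x lies in the connected component of ρ_δ in the dominant part of the lattice graph:
x is dominant and is joined to ρ_δ by a finite chain of pairwise adjacent dominant
sequences. -/
def InComponent (δ : ℤ) (x : ℕ+ → ℚ) : Prop :=
  Dominant x ∧ ∃ (r : ℕ) (c : ℕ → ℕ+ → ℚ),
    c 0 = rhod δ ∧ c r = x ∧ (∀ t ≤ r, Dominant (c t)) ∧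
    ∀ t < r, AdjacentSeq (c t) (c (t + 1))

/-- λ ∈ A_δ: λ is joined to ∅ in the Young graph by a chain of δ-regular partitions. -/
def InAdelta (δ : ℤ) (p : Ptn) : Prop :=
  ∃ (r : ℕ) (c : ℕ → Ptn), c 0 = Ptn.empty ∧ c r = p ∧
    (∀ t ≤ r, degd δ (c t) = degd δ Ptn.empty) ∧
    ∀ t < r, YoungEdge (c t) (c (t + 1))

/-!
Write `β i = λᵀ_i - i + 1`, so that `deg_δ(λ)` is the number of pairs `i < j` with `β i + β j = δ`.
The complement of the set of all `β i` consists of the numbers `γ j = j - λ_j`. A reflection count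
(`a ↦ δ - a`) shows that the number of pairs of `β`s summing to `δ` exceeds that of pairs of `γ`s
by a constant depending only on `δ`, up to the fixed point `δ / 2`. Hence `λ` is `δ`-regular iff no
two distinct `β`s sum to `δ` (for `δ ≥ 0`), and iff no two possibly equal `γ`s do (for `δ ≤ 1`).

The extreme sums are `β 1 + β 2 = λᵀ_1 + λᵀ_2 - 1`, `2 γ 1 = 2 - 2 λ_1` and
`γ 1 + γ 2 = 3 - λ_1 - λ_2`. In each case the stated bound keeps the extreme sum on the regular
side of `δ`. As adding a box changes `λᵀ_1 + λᵀ_2`, `λ_1` or `λ_1 + λ_2` by at most one, a path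
leaving the region has to pass through a partition whose extreme sum is exactly `δ`, and that
partition is not `δ`-regular. Conversely, the region consists of regular partitions and is closed
under removing boxes, so each of its members is joined to `∅` inside it.
-/

theorem coe_le_ncard_iff_mem {s : Set ℕ+} (hs : IsLowerSet s) (hfin : s.Finite) {k : ℕ+} :
    (k : ℕ) ≤ s.ncard ↔ k ∈ s := by
  constructor
  · intro hk
    by_contra hks
    have hsub : s ⊆ (Finset.Ico 1 k : Finset ℕ+) := fun t ht ↦ by
      simpa using lt_of_not_ge fun hkt ↦ hks (hs hkt ht)
    have hcard := Set.ncard_le_ncard hsub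
    rw [Set.ncard_coe_finset, PNat.card_Ico, PNat.one_coe] at hcard
    have := k.pos
    omega
  · intro hk
    have hsub : ((Finset.Icc 1 k : Finset ℕ+) : Set ℕ+) ⊆ s := fun t ht ↦
      hs (Finset.mem_Icc.1 ht).2 hk
    have hcard := Set.ncard_le_ncard hsub hfin
    rw [Set.ncard_coe_finset, PNat.card_Icc, PNat.one_coe] at hcard
    omega

theorem map_one_add_map_two_le {α : Type*} [AddCommMonoid α] [PartialOrder α]
    [IsOrderedAddMonoid α] {f : ℕ+ → α} (hf : Monotone f) {i j : ℕ+} (hij : i ≠ j) :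
    f 1 + f 2 ≤ f i + f j := by
  wlog hlt : i < j generalizing i j
  · rw [add_comm (f i)]
    exact this hij.symm (hij.lt_or_gt.resolve_left hlt)
  have htwo : 2 ≤ j := (add_le_add_left (one_le (a := i)) 1).trans (Order.add_one_le_of_lt hlt)
  exact add_le_add (hf one_le) (hf htwo)

theorem ncard_inter_add_ncard_eq {α : Type*} {A B W : Set α} (hW : W.Finite) (hA : A ⊆ W)
    (hB : B ⊆ W) : (A ∩ B).ncard + W.ncard = A.ncard + B.ncard + (W \ (A ∪ B)).ncard := by
  have hunion := Set.ncard_union_add_ncard_inter A B (hW.subset hA) (hW.subset hB)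
  have hcompl := Set.ncard_sdiff_add_ncard_of_subset (Set.union_subset hA hB) hW
  omega

section ReflPairs

/-- The elements `a` of `X` whose mirror image `δ - a` also lies in `X`: these are the members of
the pairs in `X` with sum `δ`, including the fixed point `δ / 2` when it lies in `X`. -/
def reflPairs (δ : ℤ) (X : Set ℤ) : Set ℤ := {a | a ∈ X ∧ δ - a ∈ X}

variable {δ m N : ℤ} {X : Set ℤ}

theorem reflPairs_subset_Icc_of_mem_upperBounds (hN : N ∈ upperBounds X) :
    reflPairs δ X ⊆ Set.Icc (δ - N) N := fun a ha ↦ by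
  have := hN ha.1
  have := hN ha.2
  constructor <;> omega

theorem reflPairs_subset_Icc_of_mem_lowerBounds (hm : m ∈ lowerBounds X) :
    reflPairs δ X ⊆ Set.Icc m (δ - m) := fun a ha ↦ by
  have := hm ha.1
  have := hm ha.2
  constructor <;> omega

theorem reflPairs_range_eq_empty_iff {ι : Type*} {f : ι → ℤ} :
    reflPairs δ (Set.range f) = ∅ ↔ ∀ i j, f i + f j ≠ δ := by
  rw [Set.eq_empty_iff_forall_notMem]
  constructor
  · intro h i j hij
    exact h (f i) ⟨⟨i, rfl⟩, j, by omega⟩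
  · rintro h _ ⟨⟨i, rfl⟩, j, hj⟩
    exact h i j (by omega)

theorem ncard_reflPairs_two_mul_lt (δ : ℤ) (X : Set ℤ) :
    {a ∈ reflPairs δ X | 2 * a < δ}.ncard = {a ∈ reflPairs δ X | δ < 2 * a}.ncard := by
  rw [← Set.ncard_image_of_injective {a ∈ reflPairs δ X | δ < 2 * a}
    (sub_right_injective (b := δ))]
  congr 1
  ext a
  constructor
  · rintro ⟨⟨ha, ha'⟩, hlt⟩
    exact ⟨δ - a, ⟨⟨ha', by rwa [sub_sub_cancel]⟩, by omega⟩, sub_sub_cancel δ a⟩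
  · rintro ⟨b, ⟨⟨hb, hb'⟩, hlt⟩, rfl⟩
    exact ⟨⟨hb', by rwa [sub_sub_cancel]⟩, by dsimp only; omega⟩

theorem ncard_reflPairs_eq_two_mul_add (hfin : (reflPairs δ X).Finite) :
    (reflPairs δ X).ncard =
      2 * {a ∈ reflPairs δ X | δ < 2 * a}.ncard + {a ∈ X | 2 * a = δ}.ncard := by
  have hfixed : {a ∈ X | 2 * a = δ} = {a ∈ reflPairs δ X | 2 * a = δ} := by
    ext a
    refine ⟨fun ⟨ha, h⟩ ↦ ⟨⟨ha, ?_⟩, h⟩, fun ⟨ha, h⟩ ↦ ⟨ha.1, h⟩⟩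
    rwa [show δ - a = a by omega]
  have hsplit : {a ∈ reflPairs δ X | δ < 2 * a} ∪ {a ∈ reflPairs δ X | 2 * a < δ} ∪
      {a ∈ reflPairs δ X | 2 * a = δ} = reflPairs δ X := by
    ext a
    have := lt_trichotomy δ (2 * a)
    simp only [Set.mem_union, Set.mem_ofPred_eq, eq_comm (a := 2 * a)]
    tauto
  have hdisj₁ : Disjoint {a ∈ reflPairs δ X | δ < 2 * a} {a ∈ reflPairs δ X | 2 * a < δ} :=
    Set.disjoint_left.2 fun a ha hb ↦ lt_asymm ha.2 hb.2
  have hdisj₂ : Disjoint ({a ∈ reflPairs δ X | δ < 2 * a} ∪ {a ∈ reflPairs δ X | 2 * a < δ})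
      {a ∈ reflPairs δ X | 2 * a = δ} :=
    Set.disjoint_left.2 fun a ha hb ↦ ha.elim (fun h ↦ h.2.ne' hb.2) (fun h ↦ h.2.ne hb.2)
  have hfin' (P : ℤ → Prop) : {a ∈ reflPairs δ X | P a}.Finite := hfin.subset (Set.sep_subset _ _)
  have hcard := Set.ncard_union_eq hdisj₂ ((hfin' _).union (hfin' _)) (hfin' _)
  rwa [hsplit, Set.ncard_union_eq hdisj₁ (hfin' _) (hfin' _), ncard_reflPairs_two_mul_lt,
    ← two_mul, ← hfixed] at hcard

theorem ncard_reflPairs_add_ncard_Icc (hX : N ∈ upperBounds X) (hXc : δ - N ∈ lowerBounds Xᶜ) :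
    (reflPairs δ X).ncard + (Set.Icc (δ - N) N).ncard =
      2 * (X ∩ Set.Icc (δ - N) N).ncard + (reflPairs δ Xᶜ).ncard := by
  set W := Set.Icc (δ - N) N
  set A := X ∩ W
  set B := (fun a ↦ δ - a) '' A
  have hA : A ⊆ W := Set.inter_subset_right
  have hmemB (a : ℤ) : a ∈ B ↔ δ - a ∈ X ∧ a ∈ W := by
    constructor
    · rintro ⟨b, ⟨hb, hbl, hbu⟩, rfl⟩
      exact ⟨by rwa [sub_sub_cancel], by dsimp only; omega, by dsimp only; omega⟩
    · rintro ⟨ha, hal, hau⟩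
      exact ⟨δ - a, ⟨ha, by omega, by omega⟩, sub_sub_cancel δ a⟩
  have hB : B ⊆ W := fun a ha ↦ ((hmemB a).1 ha).2
  have hinter : reflPairs δ X = A ∩ B := by
    ext a
    rw [Set.mem_inter_iff, hmemB]
    exact ⟨fun ha ↦ have haW := reflPairs_subset_Icc_of_mem_upperBounds hX ha
      ⟨⟨ha.1, haW⟩, ha.2, haW⟩, fun ⟨ha, hb⟩ ↦ ⟨ha.1, hb.1⟩⟩
  have hdiff : reflPairs δ Xᶜ = W \ (A ∪ B) := by
    ext a
    rw [Set.mem_sdiff, Set.mem_union, hmemB]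
    constructor
    · intro ha
      have haW := reflPairs_subset_Icc_of_mem_lowerBounds hXc ha
      rw [sub_sub_cancel] at haW
      exact ⟨haW, fun h ↦ h.elim (fun h ↦ ha.1 h.1) (fun h ↦ ha.2 h.1)⟩
    · rintro ⟨haW, h⟩
      exact ⟨fun hX ↦ h (.inl ⟨hX, haW⟩), fun hX ↦ h (.inr ⟨hX, haW⟩)⟩
  have hcardB : B.ncard = A.ncard := Set.ncard_image_of_injective _ sub_right_injective
  rw [hinter, hdiff, ncard_inter_add_ncard_eq (Set.finite_Icc _ _) hA hB, hcardB, two_mul]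

end ReflPairs

namespace Ptn

section Basic

variable (p : Ptn)

theorem antitone : Antitone p.toFun := fun i j ↦ p.antitone' i j

theorem ext_toFun {p q : Ptn} (h : p.toFun = q.toFun) : p = q := by
  cases p
  cases q
  congr

theorem finite_setOf_pos_toFun : {k : ℕ+ | 0 < p.toFun k}.Finite := by
  obtain ⟨N, hN⟩ := p.finite_support'
  exact (Set.finite_Iio N).subset fun k hk ↦ lt_of_not_ge fun h ↦ hk.ne' (hN k h)

theorem finite_setOf_le_toFun (i : ℕ+) : {k : ℕ+ | (i : ℕ) ≤ p.toFun k}.Finite :=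
  p.finite_setOf_pos_toFun.subset fun _ hk ↦ i.pos.trans_le hk

theorem coe_le_transpose_iff {i k : ℕ+} : (k : ℕ) ≤ p.transpose i ↔ (i : ℕ) ≤ p.toFun k :=
  coe_le_ncard_iff_mem (fun _ _ h hk ↦ le_trans hk (p.antitone h)) (p.finite_setOf_le_toFun i)

theorem transpose_antitone : Antitone p.transpose := fun i j hij ↦
  Set.ncard_le_ncard (fun _ hk ↦ (PNat.coe_le_coe i j |>.2 hij).trans hk)
    (p.finite_setOf_le_toFun i)

theorem transpose_eq_zero_iff {i : ℕ+} : p.transpose i = 0 ↔ p.toFun 1 < i := by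
  rw [← not_le, ← coe_le_transpose_iff, PNat.one_coe]
  omega

theorem toFun_empty (i : ℕ+) : empty.toFun i = 0 := rfl

theorem transpose_empty (i : ℕ+) : empty.transpose i = 0 :=
  (transpose_eq_zero_iff _).2 i.pos

end Basic

end Ptn

namespace AddBoxAt

variable {p q : Ptn} {k : ℕ+}

theorem toFun_eq (h : AddBoxAt p q k) (i : ℕ+) :
    q.toFun i = p.toFun i + if i = k then 1 else 0 := by
  split_ifs with hik
  · rw [hik, h.1]
  · rw [h.2 i hik, add_zero]

theorem transpose_eq (h : AddBoxAt p q k) (i : ℕ+) :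
    q.transpose i = p.transpose i + if (i : ℕ) = q.toFun k then 1 else 0 := by
  unfold Ptn.transpose
  split_ifs with hik
  · have hinsert : {t | (i : ℕ) ≤ q.toFun t} = insert k {t | (i : ℕ) ≤ p.toFun t} := by
      ext t
      rcases eq_or_ne t k with rfl | htk
      · simp [hik]
      · simp [h.2 t htk, htk]
    rw [hinsert, Set.ncard_insert_of_notMem _ (p.finite_setOf_le_toFun i)]
    have := h.1
    simp only [Set.mem_ofPred_eq]
    omega
  · congr 1
    ext t
    rcases eq_or_ne t k with rfl | htk
    · have := h.1
      simp only [Set.mem_ofPred_eq]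
      omega
    · simp only [Set.mem_ofPred_eq, h.2 t htk]

end AddBoxAt

namespace Ptn

section BoxInduction

/-- The number of boxes `∑ λ_i` of a partition, on which box-by-box inductions run. -/
noncomputable def size (p : Ptn) : ℕ := ∑ᶠ i, p.toFun i

theorem exists_addBoxAt_of_lt {p : Ptn} {k : ℕ+} (h : p.toFun (k + 1) < p.toFun k) :
    ∃ q, AddBoxAt q p k := by
  have hanti : Antitone (Function.update p.toFun k (p.toFun k - 1)) := by
    intro i j hij
    rcases eq_or_ne j k with rfl | hjk
    · have := p.antitone hij
      rcases eq_or_ne i j with rfl | hij'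
      · rfl
      · rw [Function.update_self, Function.update_of_ne hij']
        omega
    · rcases eq_or_ne i k with rfl | hik
      · have := p.antitone (Order.add_one_le_of_lt (hij.lt_of_ne hjk.symm))
        simp only [Function.update_of_ne hjk, Function.update_self]
        omega
      · simpa [hjk, hik] using p.antitone hij
  obtain ⟨N, hN⟩ := p.finite_support'
  refine ⟨⟨Function.update p.toFun k (p.toFun k - 1), fun _ _ hij ↦ hanti hij, N, fun i hi ↦ ?_⟩,
    ?_, fun t ht ↦ (Function.update_of_ne ht _ _).symm⟩
  · rcases eq_or_ne i k with rfl | hik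
    · simp [hN i hi]
    · simp [hik, hN i hi]
  · simp only [Function.update_self]
    omega

theorem exists_addBoxAt_of_ne_empty {p : Ptn} (hp : p ≠ empty) : ∃ q k, AddBoxAt q p k := by
  have hpos : 0 < p.transpose 1 := by
    refine Nat.pos_of_ne_zero fun h ↦ hp (ext_toFun (funext fun i ↦ ?_))
    have := p.antitone (one_le (a := i))
    have := p.transpose_eq_zero_iff.1 h
    rw [PNat.one_coe] at this
    rw [toFun_empty]
    omega
  let k : ℕ+ := ⟨p.transpose 1, hpos⟩
  have hk : 1 ≤ p.toFun k := p.coe_le_transpose_iff (i := 1).1 le_rfl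
  have hk' : ¬ 1 ≤ p.toFun (k + 1) := fun h ↦
    (p.transpose 1).not_succ_le_self (p.coe_le_transpose_iff (i := 1).2 h)
  obtain ⟨q, hq⟩ := exists_addBoxAt_of_lt (p := p) (k := k) (by omega)
  exact ⟨q, k, hq⟩

theorem size_eq_of_addBoxAt {p q : Ptn} {k : ℕ+} (h : AddBoxAt p q k) : q.size = p.size + 1 := by
  have hp : (Function.support p.toFun).Finite := by
    simpa only [Function.support, ← Nat.pos_iff_ne_zero] using p.finite_setOf_pos_toFun
  have hk : (Function.support fun i ↦ if i = k then 1 else 0).Finite :=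
    (Set.finite_singleton k).subset fun i hi ↦ by simpa using hi
  unfold size
  simp only [h.toFun_eq]
  rw [finsum_add_distrib hp hk, finsum_eq_single _ k fun i hi ↦ if_neg hi, if_pos rfl]

theorem induction_on_addBoxAt {motive : Ptn → Prop} (p : Ptn) (empty : motive empty)
    (addBox : ∀ p q k, AddBoxAt p q k → motive p → motive q) : motive p := by
  induction hn : p.size using Nat.strong_induction_on generalizing p with
  | _ n ih =>
    by_cases hp : p = Ptn.empty
    · exact hp ▸ empty
    · obtain ⟨q, k, hq⟩ := exists_addBoxAt_of_ne_empty hp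
      exact addBox q p k hq (ih q.size (by have := size_eq_of_addBoxAt hq; omega) q rfl)

end BoxInduction

section BetaNumbers

variable (p : Ptn)

/-- The `i`-th beta number `λᵀ_i - i + 1`: the entry `e_δ(λ)_i` shifted by `δ / 2`, which makes it
an integer independent of `δ`. -/
noncomputable def betaNumber (i : ℕ+) : ℤ := p.transpose i - i + 1

/-- The `j`-th gap number `j - λ_j`; the gap numbers are the integers that are not beta numbers. -/
def gapNumber (j : ℕ+) : ℤ := j - p.toFun j

theorem betaNumber_one : p.betaNumber 1 = p.transpose 1 := by simp [betaNumber]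

theorem betaNumber_two : p.betaNumber 2 = p.transpose 2 - 1 := by
  simp only [betaNumber, PNat.val_ofNat]
  omega

theorem gapNumber_one : p.gapNumber 1 = 1 - p.toFun 1 := rfl

theorem gapNumber_two : p.gapNumber 2 = 2 - p.toFun 2 := rfl

theorem betaNumber_strictAnti : StrictAnti p.betaNumber := fun i j hij ↦ by
  have := p.transpose_antitone hij.le
  have : (i : ℕ) < j := hij
  unfold betaNumber
  omega

theorem gapNumber_strictMono : StrictMono p.gapNumber := fun i j hij ↦ by
  have := p.antitone hij.le
  have : (i : ℕ) < j := hij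
  unfold gapNumber
  omega

theorem betaNumber_ne_gapNumber (i j : ℕ+) : p.betaNumber i ≠ p.gapNumber j := by
  have := p.coe_le_transpose_iff (i := i) (k := j)
  unfold betaNumber gapNumber
  omega

theorem mem_range_gapNumber_of_notMem_range_betaNumber {a : ℤ}
    (ha : a ∉ Set.range p.betaNumber) : a ∈ Set.range p.gapNumber := by
  have hfin : {i | a < p.betaNumber i}.Finite :=
    ((Set.finite_Ioc a (p.betaNumber 1)).preimage p.betaNumber_strictAnti.injective.injOn).subset
      fun i hi ↦ ⟨hi, p.betaNumber_strictAnti.antitone one_le⟩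
  obtain ⟨n, hn⟩ : ∃ n : ℕ, ∀ i : ℕ+, (i : ℕ) ≤ n ↔ a < p.betaNumber i :=
    ⟨_, fun _ ↦ coe_le_ncard_iff_mem
      (fun _ _ h hi ↦ lt_of_lt_of_le hi (p.betaNumber_strictAnti.antitone h)) hfin⟩
  have hlt : p.betaNumber n.succPNat < a :=
    (not_lt.1 fun h ↦ by simpa using (hn _).2 h).lt_of_ne fun h ↦ ha ⟨_, h⟩
  unfold betaNumber at hlt hn
  rw [Nat.succPNat_coe] at hlt
  obtain ⟨j, hj⟩ : ∃ j : ℕ+, (j : ℤ) = a + n :=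
    ⟨⟨(a + n).toNat, by omega⟩, Int.toNat_of_nonneg (by omega)⟩
  have hle : p.toFun j ≤ n := by
    have := p.coe_le_transpose_iff (i := n.succPNat) (k := j)
    rw [Nat.succPNat_coe] at this
    omega
  have hge : n ≤ p.toFun j := by
    rcases n.eq_zero_or_pos with rfl | hpos
    · exact Nat.zero_le _
    · have hbeta := (hn ⟨n, hpos⟩).1 le_rfl
      refine (p.coe_le_transpose_iff (i := ⟨n, hpos⟩)).1 ?_
      rw [PNat.mk_coe] at hbeta
      omega
  exact ⟨j, by unfold gapNumber; omega⟩

theorem compl_range_betaNumber : (Set.range p.betaNumber)ᶜ = Set.range p.gapNumber := by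
  ext a
  refine ⟨p.mem_range_gapNumber_of_notMem_range_betaNumber, ?_⟩
  rintro ⟨j, rfl⟩ ⟨i, hi⟩
  exact p.betaNumber_ne_gapNumber i j hi

theorem range_betaNumber_empty : Set.range empty.betaNumber = Set.Iic 0 := by
  ext a
  simp only [Set.mem_range, betaNumber, transpose_empty, Set.mem_Iic]
  constructor
  · rintro ⟨i, rfl⟩
    have := i.pos
    omega
  · intro ha
    exact ⟨⟨(1 - a).toNat, by omega⟩, by rw [PNat.mk_coe]; omega⟩

theorem betaNumber_le_transpose_one (i : ℕ+) : p.betaNumber i ≤ p.transpose 1 :=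
  (p.betaNumber_strictAnti.antitone one_le).trans_eq p.betaNumber_one

theorem one_sub_toFun_one_le_gapNumber (j : ℕ+) : 1 - (p.toFun 1 : ℤ) ≤ p.gapNumber j :=
  p.gapNumber_strictMono.monotone one_le

theorem transpose_one_mem_upperBounds :
    (p.transpose 1 : ℤ) ∈ upperBounds (Set.range p.betaNumber) :=
  Set.forall_mem_range.2 p.betaNumber_le_transpose_one

theorem one_sub_toFun_one_mem_lowerBounds :
    1 - (p.toFun 1 : ℤ) ∈ lowerBounds (Set.range p.betaNumber)ᶜ := by
  rw [compl_range_betaNumber]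
  exact Set.forall_mem_range.2 p.one_sub_toFun_one_le_gapNumber

theorem finite_reflPairs_betaNumber (δ : ℤ) : (reflPairs δ (Set.range p.betaNumber)).Finite :=
  (Set.finite_Icc _ _).subset
    (reflPairs_subset_Icc_of_mem_upperBounds p.transpose_one_mem_upperBounds)

theorem finite_reflPairs_compl_betaNumber (δ : ℤ) :
    (reflPairs δ (Set.range p.betaNumber)ᶜ).Finite :=
  (Set.finite_Icc _ _).subset
    (reflPairs_subset_Icc_of_mem_lowerBounds p.one_sub_toFun_one_mem_lowerBounds)

theorem ncard_range_betaNumber_inter_Icc {M : ℕ} {N : ℤ} (hM : p.toFun 1 ≤ M)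
    (hN : p.transpose 1 ≤ N) :
    (Set.range p.betaNumber ∩ Set.Icc (-(M : ℤ)) N).ncard = M + 1 := by
  have himage : Set.range p.betaNumber ∩ Set.Icc (-(M : ℤ)) N =
      p.betaNumber '' (Finset.Icc 1 M.succPNat : Finset ℕ+) := by
    ext a
    simp only [Finset.coe_Icc]
    constructor
    · rintro ⟨⟨i, rfl⟩, hlow, -⟩
      refine ⟨i, ⟨one_le, not_lt.1 fun hi ↦ ?_⟩, rfl⟩
      rw [← PNat.coe_lt_coe, Nat.succPNat_coe] at hi
      rw [betaNumber, p.transpose_eq_zero_iff.2 (by omega)] at hlow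
      omega
    · rintro ⟨i, ⟨-, hi⟩, rfl⟩
      rw [← PNat.coe_le_coe, Nat.succPNat_coe] at hi
      refine ⟨⟨i, rfl⟩, ?_, (p.betaNumber_le_transpose_one i).trans hN⟩
      unfold betaNumber
      omega
  rw [himage, Set.ncard_image_of_injective _ p.betaNumber_strictAnti.injective,
    Set.ncard_coe_finset, PNat.card_Icc]
  simp

theorem ncard_reflPairs_betaNumber (δ : ℤ) :
    ((reflPairs δ (Set.range p.betaNumber)).ncard : ℤ) =
      (reflPairs δ (Set.range p.betaNumber)ᶜ).ncard + 1 - δ := by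
  obtain ⟨N, hN, hδN, hM⟩ : ∃ N : ℤ, p.transpose 1 ≤ N ∧ δ ≤ 2 * N ∧ p.toFun 1 ≤ N - δ :=
    ⟨p.transpose 1 + p.toFun 1 + max δ 0, by omega, by omega, by omega⟩
  obtain ⟨M, hMN⟩ : ∃ M : ℕ, (M : ℤ) = N - δ := ⟨(N - δ).toNat, by omega⟩
  have hcount := ncard_reflPairs_add_ncard_Icc (δ := δ) (N := N)
    (upperBounds_mono_mem hN p.transpose_one_mem_upperBounds)
    (lowerBounds_mono_mem (by omega) p.one_sub_toFun_one_mem_lowerBounds)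
  have hwindow := p.ncard_range_betaNumber_inter_Icc (M := M) (by omega) hN
  rw [hMN, neg_sub] at hwindow
  rw [hwindow, ← Finset.coe_Icc, Set.ncard_coe_finset, Int.card_Icc] at hcount
  omega

end BetaNumbers

end Ptn

section Regularity

variable {δ : ℤ} {p : Ptn}

theorem ed_add_ed_eq_zero_iff {i j : ℕ+} :
    ed δ p i + ed δ p j = 0 ↔ p.betaNumber i + p.betaNumber j = δ := by
  unfold ed Ptn.betaNumber
  rw [← @Int.cast_inj ℚ]
  push_cast
  constructor <;> intro h <;> linarith

theorem image_betaNumber_fst_eq_sep_reflPairs :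
    (fun q ↦ p.betaNumber q.1) '' {q : ℕ+ × ℕ+ | q.1 < q.2 ∧ ed δ p q.1 + ed δ p q.2 = 0} =
      {a ∈ reflPairs δ (Set.range p.betaNumber) | δ < 2 * a} := by
  simp only [ed_add_ed_eq_zero_iff]
  ext a
  constructor
  · rintro ⟨⟨i, j⟩, ⟨hij, hsum⟩, rfl⟩
    have := p.betaNumber_strictAnti hij
    dsimp only at *
    exact ⟨⟨⟨i, rfl⟩, j, by omega⟩, by omega⟩
  · rintro ⟨⟨⟨i, rfl⟩, j, hj⟩, hlt⟩
    exact ⟨(i, j), ⟨p.betaNumber_strictAnti.lt_iff_gt.1 (by dsimp only; omega),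
      by dsimp only; omega⟩, rfl⟩

theorem degd_eq_ncard_reflPairs :
    degd δ p = {a ∈ reflPairs δ (Set.range p.betaNumber) | δ < 2 * a}.ncard := by
  rw [← image_betaNumber_fst_eq_sep_reflPairs, Set.InjOn.ncard_image]
  · rfl
  rintro ⟨i, j⟩ ⟨-, hsum⟩ ⟨i', j'⟩ ⟨-, hsum'⟩ hii'
  have hinj := p.betaNumber_strictAnti.injective
  rw [ed_add_ed_eq_zero_iff] at hsum hsum'
  dsimp only at *
  exact Prod.ext (hinj hii') (hinj (by dsimp only; omega))

theorem degd_eq_zero_iff :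
    degd δ p = 0 ↔ ∀ i j, i < j → p.betaNumber i + p.betaNumber j ≠ δ := by
  rw [degd_eq_ncard_reflPairs, Set.ncard_eq_zero
    ((p.finite_reflPairs_betaNumber δ).subset (Set.sep_subset _ _)),
    ← image_betaNumber_fst_eq_sep_reflPairs, Set.image_eq_empty, Set.eq_empty_iff_forall_notMem]
  simp only [Prod.forall, Set.mem_ofPred_eq, not_and, ed_add_ed_eq_zero_iff, ne_eq]

theorem degd_eq_zero_of_transpose_add_le (h : (p.transpose 1 + p.transpose 2 : ℤ) ≤ δ) :
    degd δ p = 0 := by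
  refine degd_eq_zero_iff.2 fun i j hij ↦ ne_of_lt ?_
  have hmax : p.betaNumber i + p.betaNumber j ≤ p.betaNumber 1 + p.betaNumber 2 :=
    map_one_add_map_two_le p.betaNumber_strictAnti.antitone.dual_right hij.ne
  rw [p.betaNumber_one, p.betaNumber_two] at hmax
  omega

namespace Ptn

/-- `λ` is `δ`-regular: its `δ`-degree of singularity is that of the empty partition. -/
def IsRegular (δ : ℤ) (p : Ptn) : Prop := degd δ p = degd δ empty

theorem isRegular_iff_of_nonneg (hδ : 0 ≤ δ) :
    p.IsRegular δ ↔ ∀ i j, i < j → p.betaNumber i + p.betaNumber j ≠ δ := by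
  rw [IsRegular, degd_eq_zero_of_transpose_add_le (p := empty) (by simpa [transpose_empty]),
    degd_eq_zero_iff]

theorem two_mul_degd_add (δ : ℤ) (p : Ptn) :
    (2 * degd δ p + {a ∈ Set.range p.betaNumber | 2 * a = δ}.ncard : ℤ) =
      (reflPairs δ (Set.range p.gapNumber)).ncard + 1 - δ := by
  rw [← compl_range_betaNumber, ← ncard_reflPairs_betaNumber,
    ncard_reflPairs_eq_two_mul_add (p.finite_reflPairs_betaNumber δ), degd_eq_ncard_reflPairs]
  push_cast
  rfl

theorem isRegular_iff_of_le_one (hδ : δ ≤ 1) :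
    p.IsRegular δ ↔ ∀ i j, p.gapNumber i + p.gapNumber j ≠ δ := by
  have hgap : (reflPairs δ (Set.range empty.gapNumber)).ncard = 0 := by
    rw [reflPairs_range_eq_empty_iff.2, Set.ncard_empty]
    intro i j
    have := i.pos
    have := j.pos
    simp only [gapNumber, toFun_empty]
    omega
  have hsub (X : Set ℤ) : {a ∈ X | 2 * a = δ}.Subsingleton := fun a ha b hb ↦ by
    have := ha.2
    have := hb.2
    omega
  have hle_one (X : Set ℤ) : {a ∈ X | 2 * a = δ}.ncard ≤ 1 :=
    (Set.ncard_le_one (hsub X).finite).2 (hsub X)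
  have hmono : {a ∈ Set.range p.betaNumber | 2 * a = δ}.ncard ≤
      {a ∈ Set.range empty.betaNumber | 2 * a = δ}.ncard := by
    refine Set.ncard_le_ncard (fun a ha ↦ ⟨?_, ha.2⟩) (hsub _).finite
    have := ha.2
    rw [range_betaNumber_empty, Set.mem_Iic]
    omega
  have hp := two_mul_degd_add δ p
  have hempty := two_mul_degd_add δ empty
  have := hle_one (Set.range p.betaNumber)
  have := hle_one (Set.range empty.betaNumber)
  rw [← reflPairs_range_eq_empty_iff, ← Set.ncard_eq_zero
    (p.compl_range_betaNumber ▸ p.finite_reflPairs_compl_betaNumber δ), IsRegular]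
  omega

end Ptn

end Regularity

namespace InAdelta

variable {δ : ℤ} {p q : Ptn}

theorem empty (δ : ℤ) : InAdelta δ Ptn.empty :=
  ⟨0, fun _ ↦ Ptn.empty, rfl, rfl, fun _ _ ↦ rfl, fun _ ht ↦ absurd ht (Nat.not_lt_zero _)⟩

theorem of_youngEdge (hp : InAdelta δ p) (hpq : YoungEdge p q) (hq : q.IsRegular δ) :
    InAdelta δ q := by
  obtain ⟨r, c, hzero, hlast, hreg, hedge⟩ := hp
  refine ⟨r + 1, fun t ↦ if t ≤ r then c t else q, by simp [hzero], by simp, fun t _ ↦ ?_,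
    fun t ht ↦ ?_⟩
  · by_cases htr : t ≤ r
    · simpa only [htr, if_true] using hreg t htr
    · simp only [htr, if_false]
      exact hq
  · rcases (Nat.lt_succ_iff.1 ht).eq_or_lt with rfl | htr
    · simpa [hlast] using hpq
    · simpa only [htr.le, Nat.succ_le_of_lt htr, if_true] using hedge t htr

theorem induction {motive : Ptn → Prop} (hp : InAdelta δ p) (empty : motive Ptn.empty)
    (step : ∀ p q, YoungEdge p q → q.IsRegular δ → motive p → motive q) : motive p := by
  obtain ⟨r, c, hzero, rfl, hreg, hedge⟩ := hp
  have hchain (t : ℕ) (ht : t ≤ r) : motive (c t) := by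
    induction t with
    | zero => rwa [hzero]
    | succ t ih => exact step _ _ (hedge t ht) (hreg _ ht) (ih (Nat.le_of_succ_le ht))
  exact hchain r le_rfl

end InAdelta

/-- Discrete intermediate value principle: `f` moves by at most one along an edge, so a path of
regular partitions cannot jump over the singular level `f = c + 1`. -/
theorem inAdelta_iff_le {δ c : ℤ} {f : Ptn → ℤ} (hempty : f Ptn.empty ≤ c)
    (hadd : ∀ {p q k}, AddBoxAt p q k → f p ≤ f q ∧ f q ≤ f p + 1)
    (hreg : ∀ {p}, f p ≤ c → p.IsRegular δ) (hsing : ∀ {p}, f p = c + 1 → ¬ p.IsRegular δ)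
    (p : Ptn) : InAdelta δ p ↔ f p ≤ c := by
  constructor
  · intro hp
    refine hp.induction (motive := fun p ↦ f p ≤ c) hempty fun p q hpq hq hfp ↦ ?_
    rcases hpq with ⟨k, hk⟩ | ⟨k, hk⟩
    · have hne : f q ≠ c + 1 := fun h ↦ hsing h hq
      have := (hadd hk).2
      omega
    · exact (hadd hk).1.trans hfp
  · induction p using Ptn.induction_on_addBoxAt with
    | empty => exact fun _ ↦ InAdelta.empty δ
    | addBox p q k hk ih =>
      exact fun hq ↦ (ih ((hadd hk).1.trans hq)).of_youngEdge (.inl ⟨k, hk⟩) (hreg hq)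

section Characterization

variable {δ : ℤ} (p : Ptn)

theorem inAdelta_iff_of_nonneg (hδ : 0 ≤ δ) :
    InAdelta δ p ↔ (p.transpose 1 + p.transpose 2 : ℤ) ≤ δ := by
  refine inAdelta_iff_le (f := fun p ↦ p.transpose 1 + p.transpose 2)
    (by simpa [Ptn.transpose_empty])
    (fun {p q k} hk ↦ ?_) (fun {p} hp ↦ ?_) (fun {p} hp hreg ↦ ?_) p
  · have h₁ := hk.transpose_eq 1
    have h₂ := hk.transpose_eq 2
    rw [PNat.val_ofNat] at h₁ h₂
    split_ifs at h₁ h₂ <;> omega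
  · rw [Ptn.IsRegular, degd_eq_zero_of_transpose_add_le hp,
      degd_eq_zero_of_transpose_add_le (by simpa [Ptn.transpose_empty])]
  · refine (Ptn.isRegular_iff_of_nonneg hδ).1 hreg 1 2 (by decide) ?_
    rw [p.betaNumber_one, p.betaNumber_two]
    omega

theorem inAdelta_iff_of_even (hδ : δ ≤ 0) (heven : Even δ) :
    InAdelta δ p ↔ 2 * (p.toFun 1 : ℤ) ≤ -δ := by
  obtain ⟨n, rfl⟩ := heven
  rw [show 2 * (p.toFun 1 : ℤ) ≤ -(n + n) ↔ (p.toFun 1 : ℤ) ≤ -n by omega]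
  refine inAdelta_iff_le (f := fun p ↦ p.toFun 1) (by rw [Ptn.toFun_empty]; omega)
    (fun {p q k} hk ↦ ?_) (fun {p} hp ↦ ?_) (fun {p} hp hreg ↦ ?_) p
  · have := hk.toFun_eq 1
    split_ifs at this <;> omega
  · refine (Ptn.isRegular_iff_of_le_one (by omega)).2 fun i j ↦ ne_of_gt ?_
    have := p.one_sub_toFun_one_le_gapNumber i
    have := p.one_sub_toFun_one_le_gapNumber j
    omega
  · refine (Ptn.isRegular_iff_of_le_one (by omega)).1 hreg 1 1 ?_
    rw [p.gapNumber_one]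
    omega

theorem inAdelta_iff_of_odd (hδ : δ ≤ 1) (hodd : Odd δ) :
    InAdelta δ p ↔ (p.toFun 1 + p.toFun 2 : ℤ) ≤ 2 - δ := by
  refine inAdelta_iff_le (f := fun p ↦ p.toFun 1 + p.toFun 2)
    (by simp only [Ptn.toFun_empty]; omega)
    (fun {p q k} hk ↦ ?_) (fun {p} hp ↦ ?_) (fun {p} hp hreg ↦ ?_) p
  · have h₁ := hk.toFun_eq 1
    have h₂ := hk.toFun_eq 2
    simp only [← PNat.coe_inj, PNat.val_ofNat] at h₁ h₂
    split_ifs at h₁ h₂ <;> omega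
  · refine (Ptn.isRegular_iff_of_le_one hδ).2 fun i j hij ↦ ?_
    rcases eq_or_ne i j with rfl | hne
    · exact Int.not_even_iff_odd.2 hodd ⟨_, hij.symm⟩
    · have hmin := map_one_add_map_two_le p.gapNumber_strictMono.monotone hne
      rw [p.gapNumber_one, p.gapNumber_two] at hmin
      omega
  · refine (Ptn.isRegular_iff_of_le_one hδ).1 hreg 1 2 ?_
    rw [p.gapNumber_one, p.gapNumber_two]
    omega

end Characterization

/-- λ ∈ A_δ iff (i) δ ≥ 0 and λ^T_1 + λ^T_2 ≤ δ, or (ii) δ < 0 even and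
λ_1 ≤ −δ/2, or (iii) δ < 0 odd and λ_1 + λ_2 ≤ 2 − δ. -/
theorem stmt17 (δ : ℤ) (p : Ptn) :
    InAdelta δ p ↔
      (0 ≤ δ ∧ (p.transpose 1 : ℤ) + (p.transpose 2 : ℤ) ≤ δ) ∨
      (δ < 0 ∧ Even δ ∧ 2 * (p.toFun 1 : ℤ) ≤ -δ) ∨
      (δ < 0 ∧ Odd δ ∧ (p.toFun 1 : ℤ) + (p.toFun 2 : ℤ) ≤ 2 - δ) := by
  rcases lt_or_ge δ 0 with hneg | hnonneg
  · rcases Int.even_or_odd δ with heven | hodd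
    · have hodd := Int.not_odd_iff_even.2 heven
      simp [inAdelta_iff_of_even p hneg.le heven, hneg, hneg.not_ge, heven, hodd]
    · have heven := Int.not_even_iff_odd.2 hodd
      simp [inAdelta_iff_of_odd p (by omega) hodd, hneg, hneg.not_ge, hodd, heven]
  · simp [inAdelta_iff_of_nonneg p hnonneg, hnonneg, hnonneg.not_gt]
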